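/- Let ρ be a density matrix on n qubits with von Neumann entropy S(ρ), and let D_p^{n_c} = N_p^{⊗(n−n_c)} ⊗ id^{⊗ n_c} be the channel applying single-qubit depolarizing noise with parameter p ∈ [0,1] to the first n−n_c qubits and the identity to the rest. Then S(D_p^{n_c}(ρ)) ≥ (1−p)·S(ρ) + p·(n−n_c)·log 2. -/

import Mathlib

open Matrix MeasureTheory
open scoped ComplexOrder

/-- von Neumann entropy of a (Hermitian) matrix, via its eigenvalues.
Junk value `0` if the matrix is not Hermitian. -/
noncomputable def vnEntropy {ι : Type*} [Fintype ι] [DecidableEq ι]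
    (M : Matrix ι ι ℂ) : ℝ :=
  if h : M.IsHermitian then -∑ i, h.eigenvalues i * Real.log (h.eigenvalues i) else 0

/-- The channel that fully depolarizes (replaces by `I/2`) the system qubits in `S ⊆ Fin k`,
acting as the identity on the remaining system qubits and on the `c` ancilla qubits. -/
noncomputable def depolSet {k c : ℕ} (S : Finset (Fin k))
    (ρ : Matrix ((Fin k → Fin 2) × (Fin c → Fin 2)) ((Fin k → Fin 2) × (Fin c → Fin 2)) ℂ) :
    Matrix ((Fin k → Fin 2) × (Fin c → Fin 2)) ((Fin k → Fin 2) × (Fin c → Fin 2)) ℂ :=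
  Matrix.of fun x y =>
    if ∀ i ∈ S, x.1 i = y.1 i then
      ((2 : ℂ) ^ S.card)⁻¹ * (((2 : ℂ) ^ (k - S.card))⁻¹ *
        ∑ z : Fin k → Fin 2, ρ (S.piecewise z x.1, x.2) (S.piecewise z y.1, y.2))
    else 0

/-- The channel `N_p^{⊗k} ⊗ id` : single-qubit depolarizing noise with parameter `p`
on each of the first `k` qubits, identity on the `c` ancilla qubits.  (Expanding
`N_p = (1-p)·id + p·(full single-qubit depolarization)` over subsets.) -/
noncomputable def depolChannel {k c : ℕ} (p : ℝ)
    (ρ : Matrix ((Fin k → Fin 2) × (Fin c → Fin 2)) ((Fin k → Fin 2) × (Fin c → Fin 2)) ℂ) :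
    Matrix ((Fin k → Fin 2) × (Fin c → Fin 2)) ((Fin k → Fin 2) × (Fin c → Fin 2)) ℂ :=
  ∑ S : Finset (Fin k), (((p : ℂ)) ^ S.card * ((1 - p : ℝ) : ℂ) ^ (k - S.card)) • depolSet S ρ

/-! Depolarizing a qubit with probability `p` means erasing it (replacing it by the maximally mixed
state) with probability `p`. Inserting the qubits one at a time, by concavity the entropy after
noise on `insert i U` is at least a mixture of entropies after noise on `U`. With the induction
hypothesis for `ρ` and `E_i ρ`, what remains is `S(ρ) + S(E_i E_U ρ) ≤ S(E_i ρ) + S(E_U ρ)`, which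
is strong subadditivity. Erasing all `k` qubits leaves entropy at least `k log 2`.

Strong subadditivity is the data-processing inequality for the relative entropy of `ρ` and `E_U ρ`.
By the integral representation `D(A‖B) = ∫₀^∞ χ²_t(A, B) / (1 + t)² dt`, data processing reduces to
the divergences `χ²_t(A, B) = Tr (A - B) (R_B + t L_A)⁻¹ (A - B)`. Each of these is the maximum of a
quadratic functional of a test matrix, and pulling the test matrix back along the adjoint of a
channel can only increase that functional, by the Schwarz inequality. -/

open scoped MatrixOrder Kronecker Topology

section EigenCoords

variable {ι : Type*} [Fintype ι] [DecidableEq ι] {A B : Matrix ι ι ℂ}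

lemma continuousOn_spectrum (A : Matrix ι ι ℂ) (f : ℝ → ℝ) : ContinuousOn f (spectrum ℝ A) :=
  (finite_real_spectrum (A := A)).continuousOn f

lemma trace_cfc (hA : A.IsHermitian) (f : ℝ → ℝ) :
    (cfc f A).trace = ∑ i, (f (hA.eigenvalues i) : ℂ) := by
  rw [hA.cfc_eq, Matrix.IsHermitian.cfc, Unitary.conjStarAlgAut_apply, trace_mul_cycle,
    Unitary.coe_star_mul_self, one_mul, trace_diagonal]
  rfl

/-- The matrix of `X` with respect to the eigenbasis of `B` in its domain and the eigenbasis of `A`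
in its codomain, in which multiplication by functions of `A` and `B` becomes a rescaling of
entries. -/
noncomputable def eigenCoords (hA : A.IsHermitian) (hB : B.IsHermitian) (X : Matrix ι ι ℂ) :
    Matrix ι ι ℂ :=
  star (hA.eigenvectorUnitary : Matrix ι ι ℂ) * X * hB.eigenvectorUnitary

variable (hA : A.IsHermitian) (hB : B.IsHermitian)

lemma eigenCoords_surjective : Function.Surjective (eigenCoords hA hB) := fun x => by
  refine ⟨hA.eigenvectorUnitary * x * star (hB.eigenvectorUnitary : Matrix ι ι ℂ), ?_⟩
  simp only [eigenCoords, ← mul_assoc, Unitary.coe_star_mul_self, one_mul]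
  rw [mul_assoc, Unitary.coe_star_mul_self, mul_one]

lemma eigenCoords_sub (X Y : Matrix ι ι ℂ) :
    eigenCoords hA hB (X - Y) = eigenCoords hA hB X - eigenCoords hA hB Y := by
  simp only [eigenCoords, mul_sub, sub_mul]

lemma eigenCoords_cfc_mul (f : ℝ → ℝ) (X : Matrix ι ι ℂ) (i j : ι) :
    eigenCoords hA hB (cfc f A * X) i j = f (hA.eigenvalues i) * eigenCoords hA hB X i j := by
  have h : eigenCoords hA hB (cfc f A * X) =
      diagonal (RCLike.ofReal ∘ f ∘ hA.eigenvalues) * eigenCoords hA hB X := by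
    simp only [eigenCoords, hA.cfc_eq, Matrix.IsHermitian.cfc, Unitary.conjStarAlgAut_apply,
      ← mul_assoc, Unitary.coe_star_mul_self, one_mul]
  rw [h, diagonal_mul]
  rfl

lemma eigenCoords_mul_cfc (f : ℝ → ℝ) (X : Matrix ι ι ℂ) (i j : ι) :
    eigenCoords hA hB (X * cfc f B) i j = f (hB.eigenvalues j) * eigenCoords hA hB X i j := by
  have h : eigenCoords hA hB (X * cfc f B) =
      eigenCoords hA hB X * diagonal (RCLike.ofReal ∘ f ∘ hB.eigenvalues) := by
    simp only [eigenCoords, hB.cfc_eq, Matrix.IsHermitian.cfc, Unitary.conjStarAlgAut_apply,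
      mul_assoc, Unitary.coe_star_mul_self, mul_one]
  rw [h, mul_diagonal, mul_comm]
  rfl

lemma trace_conjTranspose_mul_eq_sum_eigenCoords (X Y : Matrix ι ι ℂ) :
    (Xᴴ * Y).trace =
      ∑ i, ∑ j, star (eigenCoords hA hB X i j) * eigenCoords hA hB Y i j := by
  have h : (eigenCoords hA hB X)ᴴ * eigenCoords hA hB Y =
      star (hB.eigenvectorUnitary : Matrix ι ι ℂ) * (Xᴴ * Y) * hB.eigenvectorUnitary := by
    simp only [eigenCoords, ← star_eq_conjTranspose, star_mul, star_star, mul_assoc]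
    rw [← mul_assoc (hA.eigenvectorUnitary : Matrix ι ι ℂ) (star _), Unitary.mul_star_self_of_mem
      hA.eigenvectorUnitary.2, one_mul]
  have h' : ((eigenCoords hA hB X)ᴴ * eigenCoords hA hB Y).trace = (Xᴴ * Y).trace := by
    rw [h, trace_mul_cycle, Unitary.mul_star_self_of_mem hB.eigenvectorUnitary.2, one_mul]
  rw [← h', Finset.sum_comm]
  rfl

/-- The squared overlap `|⟨eᵢ, fⱼ⟩|²` of the `i`-th eigenvector of `A` with the `j`-th eigenvector
of `B`. -/
noncomputable def overlap (hA : A.IsHermitian) (hB : B.IsHermitian) (i j : ι) : ℝ :=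
  Complex.normSq (eigenCoords hA hB 1 i j)

lemma trace_cfc_mul_cfc (f g : ℝ → ℝ) :
    (cfc f A * cfc g B).trace =
      ((∑ i, ∑ j, overlap hA hB i j * (f (hA.eigenvalues i) * g (hB.eigenvalues j)) : ℝ) : ℂ) := by
  have hf : cfc f A = (cfc f A * 1)ᴴ := by
    rw [mul_one]; exact (cfc_predicate f A).star_eq.symm
  have hg : cfc g B = 1 * cfc g B := (one_mul _).symm
  rw [hf, hg, trace_conjTranspose_mul_eq_sum_eigenCoords hA hB]
  push_cast [overlap, ← Complex.mul_conj]
  refine Finset.sum_congr rfl fun i _ => Finset.sum_congr rfl fun j _ => ?_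
  rw [eigenCoords_cfc_mul, eigenCoords_mul_cfc, star_mul', RCLike.star_def,
    Complex.conj_ofReal]
  ring

omit [DecidableEq ι] in
lemma re_trace_mul_nonneg (hA : A.PosSemidef) (hB : B.PosSemidef) : 0 ≤ (A * B).trace.re := by
  classical
  have h := trace_cfc_mul_cfc hA.1 hB.1 id id
  rw [cfc_id ℝ A hA.1.isSelfAdjoint, cfc_id ℝ B hB.1.isSelfAdjoint] at h
  rw [h, Complex.ofReal_re]
  exact Finset.sum_nonneg fun i _ => Finset.sum_nonneg fun j _ =>
    mul_nonneg (Complex.normSq_nonneg _) (mul_nonneg (hA.eigenvalues_nonneg i)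
      (hB.eigenvalues_nonneg j))

end EigenCoords

section Entropy

variable {ι : Type*} [Fintype ι] [DecidableEq ι] {A B : Matrix ι ι ℂ}

lemma vnEntropy_eq_sum (hA : A.IsHermitian) :
    vnEntropy A = ∑ i, Real.negMulLog (hA.eigenvalues i) := by
  simp only [vnEntropy, dif_pos hA, Real.negMulLog, neg_mul, Finset.sum_neg_distrib]

lemma vnEntropy_eq_trace_cfc (hA : A.IsHermitian) :
    vnEntropy A = (cfc Real.negMulLog A).trace.re := by
  rw [vnEntropy_eq_sum hA, trace_cfc hA, ← Complex.ofReal_sum, Complex.ofReal_re]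

lemma vnEntropy_eq_neg_trace_mul_log (hA : A.IsHermitian) :
    vnEntropy A = -(A * cfc Real.log A).trace.re := by
  have hmul : cfc (fun x => x * Real.log x) A = A * cfc Real.log A := by
    rw [cfc_mul _ _ A (continuousOn_spectrum A _) (continuousOn_spectrum A _),
      cfc_id' ℝ A hA.isSelfAdjoint]
  have hneg : cfc Real.negMulLog A = -cfc (fun x => x * Real.log x) A := by
    rw [← cfc_neg]
    simp only [Real.negMulLog_def, neg_mul]
  rw [vnEntropy_eq_trace_cfc hA, hneg, hmul, trace_neg, Complex.neg_re]

lemma vnEntropy_cfc (hA : A.IsHermitian) (f : ℝ → ℝ) :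
    vnEntropy (cfc f A) = ∑ i, Real.negMulLog (f (hA.eigenvalues i)) := by
  rw [vnEntropy_eq_trace_cfc (cfc_predicate f A : IsSelfAdjoint _),
    ← cfc_comp _ f A hA.isSelfAdjoint (((finite_real_spectrum (A := A)).image f).continuousOn _)
      (continuousOn_spectrum A f), trace_cfc hA, ← Complex.ofReal_sum, Complex.ofReal_re]
  rfl

lemma tendsto_vnEntropy_add_smul_one (hA : A.IsHermitian) :
    Filter.Tendsto (fun t : ℝ => vnEntropy (A + t • (1 : Matrix ι ι ℂ))) (𝓝[>] 0)
      (𝓝 (vnEntropy A)) := by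
  have hshift (t : ℝ) : vnEntropy (A + t • (1 : Matrix ι ι ℂ)) =
      ∑ i, Real.negMulLog (hA.eigenvalues i + t) := by
    rw [← vnEntropy_cfc hA (· + t), cfc_add_const t _ A (continuousOn_spectrum A _),
      cfc_id' ℝ A hA.isSelfAdjoint, Algebra.algebraMap_eq_smul_one]
  have hcont : Continuous fun t : ℝ => ∑ i, Real.negMulLog (hA.eigenvalues i + t) :=
    continuous_finsetSum _ fun i _ =>
      Real.continuous_negMulLog.comp (continuous_const.add continuous_id)
  simp only [hshift]
  simpa only [add_zero, ← vnEntropy_eq_sum hA] using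
    (hcont.tendsto 0).mono_left nhdsWithin_le_nhds

end Entropy

section ScalarKernel

variable {p q : ℝ} (hp : 0 < p) (hq : 0 < q)

include hp hq

lemma hasDerivAt_relEntropy_primitive {t : ℝ} (ht : 0 ≤ t) :
    HasDerivAt (fun t => p * (Real.log (q + t * p) - Real.log (1 + t)) - (q - p) / (1 + t))
      ((p - q) ^ 2 / (q + t * p) / (1 + t) ^ 2) t := by
  have hpos : 0 < q + t * p := by positivity
  have hpos' : 0 < 1 + t := by positivity
  have hlin : HasDerivAt (fun t : ℝ => q + t * p) p t := by
    simpa using ((hasDerivAt_id t).mul_const p).const_add q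
  have hlin' : HasDerivAt (fun t : ℝ => 1 + t) 1 t := (hasDerivAt_id t).const_add 1
  refine ((((hlin.log hpos.ne').sub (hlin'.log hpos'.ne')).const_mul p).sub
    ((hasDerivAt_const t (q - p)).div hlin' hpos'.ne')).congr_deriv ?_
  field_simp
  ring

lemma tendsto_relEntropy_primitive :
    Filter.Tendsto
      (fun t => p * (Real.log (q + t * p) - Real.log (1 + t)) - (q - p) / (1 + t))
      Filter.atTop (𝓝 (p * Real.log p)) := by
  have hfrac : Filter.Tendsto (fun t : ℝ => (q - p) / (1 + t)) Filter.atTop (𝓝 0) :=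
    (Filter.tendsto_atTop_add_const_left _ _ Filter.tendsto_id).const_div_atTop _
  have hratio : Filter.Tendsto (fun t : ℝ => p + (q - p) / (1 + t)) Filter.atTop (𝓝 p) := by
    simpa using hfrac.const_add p
  have hlim := ((hratio.log hp.ne').const_mul p).sub hfrac
  rw [sub_zero] at hlim
  refine hlim.congr' ?_
  filter_upwards [Filter.eventually_ge_atTop 0] with t ht
  have hpos : 0 < q + t * p := by positivity
  have hpos' : 0 < 1 + t := by positivity
  have hdiv : p + (q - p) / (1 + t) = (q + t * p) / (1 + t) := by
    field_simp
    ring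
  rw [← Real.log_div hpos.ne' hpos'.ne', hdiv]

lemma integrableOn_relEntropy_kernel :
    IntegrableOn (fun t => (p - q) ^ 2 / (q + t * p) / (1 + t) ^ 2) (Set.Ioi 0) :=
  integrableOn_Ioi_deriv_of_nonneg' (fun _ => hasDerivAt_relEntropy_primitive hp hq)
    (fun t (ht : 0 < t) => by positivity) (tendsto_relEntropy_primitive hp hq)

lemma integral_relEntropy_kernel :
    ∫ t in Set.Ioi (0 : ℝ), (p - q) ^ 2 / (q + t * p) / (1 + t) ^ 2 =
      p * Real.log p - p * Real.log q - p + q := by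
  rw [integral_Ioi_of_hasDerivAt_of_nonneg' (fun _ => hasDerivAt_relEntropy_primitive hp hq)
    (fun t (ht : 0 < t) => by positivity) (tendsto_relEntropy_primitive hp hq)]
  simp only [zero_mul, add_zero, Real.log_one, sub_zero, div_one]
  ring

end ScalarKernel

section RelEntropy

variable {ι : Type*} [Fintype ι] [DecidableEq ι] {A B : Matrix ι ι ℂ}

/-- Umegaki relative entropy `Tr A (log A - log B)`, corrected by `Tr (B - A)` so that it is
nonnegative without normalizing the traces. -/
noncomputable def relEntropy (A B : Matrix ι ι ℂ) : ℝ :=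
  (A * (cfc Real.log A - cfc Real.log B)).trace.re - A.trace.re + B.trace.re

lemma relEntropy_eq_neg_vnEntropy_sub (hA : A.IsHermitian) (B : Matrix ι ι ℂ) :
    relEntropy A B = -vnEntropy A - (A * cfc Real.log B).trace.re - A.trace.re + B.trace.re := by
  rw [relEntropy, mul_sub, trace_sub, Complex.sub_re, vnEntropy_eq_neg_trace_mul_log hA, neg_neg]

lemma relEntropy_eq_sum (hA : A.IsHermitian) (hB : B.IsHermitian) :
    relEntropy A B = ∑ i, ∑ j, overlap hA hB i j *
      (hA.eigenvalues i * Real.log (hA.eigenvalues i) -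
        hA.eigenvalues i * Real.log (hB.eigenvalues j) -
        hA.eigenvalues i + hB.eigenvalues j) := by
  have htr (f g : ℝ → ℝ) : (cfc f A * cfc g B).trace.re =
      ∑ i, ∑ j, overlap hA hB i j * (f (hA.eigenvalues i) * g (hB.eigenvalues j)) := by
    rw [trace_cfc_mul_cfc hA hB, Complex.ofReal_re]
  have hidA : cfc id A = A := cfc_id ℝ A hA.isSelfAdjoint
  have hidB : cfc id B = B := cfc_id ℝ B hB.isSelfAdjoint
  have honeA : cfc (fun _ : ℝ => (1 : ℝ)) A = 1 := cfc_const_one ℝ A hA.isSelfAdjoint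
  have honeB : cfc (fun _ : ℝ => (1 : ℝ)) B = 1 := cfc_const_one ℝ B hB.isSelfAdjoint
  have hAlog := htr (fun x => x * Real.log x) (fun _ => 1)
  have hBlog := htr id Real.log
  have hA1 := htr id (fun _ => 1)
  have hB1 := htr (fun _ => 1) id
  rw [honeB, mul_one, cfc_mul _ _ A (continuousOn_spectrum A _) (continuousOn_spectrum A _),
    cfc_id' ℝ A hA.isSelfAdjoint] at hAlog
  rw [hidA] at hBlog
  rw [hidA, honeB, mul_one] at hA1
  rw [hidB, honeA, one_mul] at hB1
  rw [relEntropy, mul_sub, trace_sub, Complex.sub_re, hAlog, hBlog, hA1, hB1]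
  simp only [← Finset.sum_sub_distrib, ← Finset.sum_add_distrib, ← mul_sub, ← mul_add, id, mul_one,
    one_mul]

/-- The `χ²`-type divergence `Tr (A - B) (R_B + t L_A)⁻¹ (A - B)`, where `L_A` and `R_B` are left
multiplication by `A` and right multiplication by `B`. -/
noncomputable def chiSqDiv (hA : A.IsHermitian) (hB : B.IsHermitian) (t : ℝ) : ℝ :=
  ∑ i, ∑ j, overlap hA hB i j *
    ((hA.eigenvalues i - hB.eigenvalues j) ^ 2 / (hB.eigenvalues j + t * hA.eigenvalues i))

lemma chiSqDiv_div (hA : A.IsHermitian) (hB : B.IsHermitian) (t c : ℝ) :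
    chiSqDiv hA hB t / c = ∑ i, ∑ j, overlap hA hB i j *
      ((hA.eigenvalues i - hB.eigenvalues j) ^ 2 /
        (hB.eigenvalues j + t * hA.eigenvalues i) / c) := by
  simp only [chiSqDiv, Finset.sum_div, mul_div_assoc]

lemma integrableOn_chiSqDiv (hA : A.PosDef) (hB : B.PosDef) :
    IntegrableOn (fun t => chiSqDiv hA.1 hB.1 t / (1 + t) ^ 2) (Set.Ioi 0) := by
  simp only [chiSqDiv_div]
  exact integrable_finsetSum _ fun i _ => integrable_finsetSum _ fun j _ =>
    (integrableOn_relEntropy_kernel (hA.eigenvalues_pos i) (hB.eigenvalues_pos j)).const_mul _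

lemma relEntropy_eq_integral (hA : A.PosDef) (hB : B.PosDef) :
    relEntropy A B = ∫ t in Set.Ioi (0 : ℝ), chiSqDiv hA.1 hB.1 t / (1 + t) ^ 2 := by
  have hint (i j : ι) :=
    (integrableOn_relEntropy_kernel (hA.eigenvalues_pos i) (hB.eigenvalues_pos j)).const_mul
      (overlap hA.1 hB.1 i j)
  simp only [chiSqDiv_div]
  rw [relEntropy_eq_sum hA.1 hB.1,
    integral_finsetSum _ fun i _ => integrable_finsetSum _ fun j _ => hint i j]
  refine Finset.sum_congr rfl fun i _ => ?_
  rw [integral_finsetSum _ fun j _ => hint i j]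
  refine Finset.sum_congr rfl fun j _ => ?_
  rw [integral_const_mul,
    integral_relEntropy_kernel (hA.eigenvalues_pos i) (hB.eigenvalues_pos j)]

lemma chiSqDiv_nonneg (hA : A.PosDef) (hB : B.PosDef) {t : ℝ} (ht : 0 ≤ t) :
    0 ≤ chiSqDiv hA.1 hB.1 t := by
  refine Finset.sum_nonneg fun i _ => Finset.sum_nonneg fun j _ =>
    mul_nonneg (Complex.normSq_nonneg _) ?_
  have hp := hA.eigenvalues_pos i
  have hq := hB.eigenvalues_pos j
  positivity

lemma relEntropy_nonneg (hA : A.PosDef) (hB : B.PosDef) : 0 ≤ relEntropy A B := by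
  rw [relEntropy_eq_integral hA hB]
  exact setIntegral_nonneg measurableSet_Ioi fun t ht =>
    div_nonneg (chiSqDiv_nonneg hA hB (Set.mem_Ioi.mp ht).le) (sq_nonneg _)

/-- The concave quadratic functional of `X` whose maximum is `chiSqDiv`; unlike the eigenvalue
formula, it is visibly monotone under completely positive maps. -/
noncomputable def chiSqFunctional (A B : Matrix ι ι ℂ) (t : ℝ) (X : Matrix ι ι ℂ) : ℝ :=
  2 * ((A - B) * X).trace.re - (B * (Xᴴ * X)).trace.re - t * (A * (X * Xᴴ)).trace.re

lemma chiSqFunctional_eq_sum (hA : A.IsHermitian) (hB : B.IsHermitian) (t : ℝ)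
    (X : Matrix ι ι ℂ) :
    chiSqFunctional A B t X = ∑ i, ∑ j,
      (2 * (hA.eigenvalues i - hB.eigenvalues j) *
          (star (eigenCoords hA hB 1 i j) * eigenCoords hA hB X i j).re -
        (hB.eigenvalues j + t * hA.eigenvalues i) *
          Complex.normSq (eigenCoords hA hB X i j)) := by
  have hcA (Y : Matrix ι ι ℂ) (i j : ι) :
      eigenCoords hA hB (A * Y) i j = hA.eigenvalues i * eigenCoords hA hB Y i j := by
    simpa only [cfc_id' ℝ A hA.isSelfAdjoint] using eigenCoords_cfc_mul hA hB (fun x => x) Y i j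
  have hcB (Y : Matrix ι ι ℂ) (i j : ι) :
      eigenCoords hA hB (Y * B) i j = hB.eigenvalues j * eigenCoords hA hB Y i j := by
    simpa only [cfc_id' ℝ B hB.isSelfAdjoint] using eigenCoords_mul_cfc hA hB (fun x => x) Y i j
  have hlin : ((A - B) * X).trace = ((A * 1 - 1 * B)ᴴ * X).trace := by
    rw [mul_one, one_mul, conjTranspose_sub, hA.eq, hB.eq]
  have hquadB : (B * (Xᴴ * X)).trace = (Xᴴ * (X * B)).trace := by
    rw [trace_mul_comm, mul_assoc]
  have hquadA : (A * (X * Xᴴ)).trace = (Xᴴ * (A * X)).trace := by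
    rw [← mul_assoc, trace_mul_comm]
  rw [chiSqFunctional, hlin, hquadB, hquadA]
  simp only [trace_conjTranspose_mul_eq_sum_eigenCoords hA hB, eigenCoords_sub,
    Matrix.sub_apply, hcA, hcB,
    Complex.re_sum, Finset.mul_sum, ← Finset.sum_sub_distrib]
  refine Finset.sum_congr rfl fun i _ => Finset.sum_congr rfl fun j _ => ?_
  simp only [RCLike.star_def, map_sub, map_mul, Complex.mul_re, Complex.mul_im, Complex.sub_re,
    Complex.sub_im, Complex.conj_re, Complex.conj_im, Complex.ofReal_re, Complex.ofReal_im,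
    Complex.normSq_apply]
  ring

lemma complete_square (w x : ℂ) (d : ℝ) {c : ℝ} (hc : c ≠ 0) :
    2 * d * (star w * x).re - c * Complex.normSq x =
      Complex.normSq w * (d ^ 2 / c) - c * Complex.normSq (x - (d / c : ℝ) * w) := by
  simp only [RCLike.star_def, Complex.normSq_apply, Complex.mul_re, Complex.mul_im, Complex.sub_re,
    Complex.sub_im, Complex.conj_re, Complex.conj_im, Complex.ofReal_re, Complex.ofReal_im]
  field_simp
  ring

lemma isGreatest_chiSqDiv (hA : A.PosDef) (hB : B.PosDef) {t : ℝ} (ht : 0 ≤ t) :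
    IsGreatest (Set.range (chiSqFunctional A B t)) (chiSqDiv hA.1 hB.1 t) := by
  set p := hA.1.eigenvalues with hp
  set q := hB.1.eigenvalues with hq
  have hpos (i j : ι) : 0 < q j + t * p i :=
    add_pos_of_pos_of_nonneg (hB.eigenvalues_pos j) (mul_nonneg ht (hA.eigenvalues_pos i).le)
  have hsq (X : Matrix ι ι ℂ) : chiSqFunctional A B t X = chiSqDiv hA.1 hB.1 t -
      ∑ i, ∑ j, (q j + t * p i) * Complex.normSq (eigenCoords hA.1 hB.1 X i j -
        ((p i - q j) / (q j + t * p i) : ℝ) * eigenCoords hA.1 hB.1 1 i j) := by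
    rw [chiSqFunctional_eq_sum hA.1 hB.1]
    simp only [chiSqDiv, overlap, ← Finset.sum_sub_distrib, ← hp, ← hq,
      complete_square _ _ _ (hpos _ _).ne']
  constructor
  · obtain ⟨X, hX⟩ := eigenCoords_surjective hA.1 hB.1 (Matrix.of fun i j =>
      ((p i - q j) / (q j + t * p i) : ℝ) * eigenCoords hA.1 hB.1 1 i j)
    exact ⟨X, by simp only [hsq, hX, of_apply, sub_self, map_zero, mul_zero,
      Finset.sum_const_zero, sub_zero]⟩
  · rintro _ ⟨X, rfl⟩
    rw [hsq]
    exact sub_le_self _ (Finset.sum_nonneg fun i _ => Finset.sum_nonneg fun j _ =>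
      mul_nonneg (hpos i j).le (Complex.normSq_nonneg _))

variable {κ : Type*} [Fintype κ]
  {Φ : Matrix ι ι ℂ →ₗ[ℂ] Matrix κ κ ℂ} {Ψ : Matrix κ κ ℂ →ₗ[ℂ] Matrix ι ι ℂ}

omit [DecidableEq ι] in
lemma chiSqFunctional_map_le (hA : A.PosSemidef) (hB : B.PosSemidef)
    (hadj : ∀ A X, (Φ A * X).trace = (A * Ψ X).trace) (hstar : ∀ X, Ψ Xᴴ = (Ψ X)ᴴ)
    (hSchwarz : ∀ X, (Ψ (Xᴴ * X) - (Ψ X)ᴴ * Ψ X).PosSemidef) {t : ℝ} (ht : 0 ≤ t)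
    (X : Matrix κ κ ℂ) :
    chiSqFunctional (Φ A) (Φ B) t X ≤ chiSqFunctional A B t (Ψ X) := by
  have hB' : (B * ((Ψ X)ᴴ * Ψ X)).trace.re ≤ (B * Ψ (Xᴴ * X)).trace.re := by
    rw [← sub_nonneg, ← Complex.sub_re, ← trace_sub, ← mul_sub]
    exact re_trace_mul_nonneg hB (hSchwarz X)
  have hA' : (A * (Ψ X * (Ψ X)ᴴ)).trace.re ≤ (A * Ψ (X * Xᴴ)).trace.re := by
    rw [← sub_nonneg, ← Complex.sub_re, ← trace_sub, ← mul_sub]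
    simpa only [hstar, conjTranspose_conjTranspose] using re_trace_mul_nonneg hA (hSchwarz Xᴴ)
  simp only [chiSqFunctional, ← map_sub, hadj]
  gcongr

/-- **Data-processing inequality**, by comparing the variational formulas for `chiSqDiv`: a test
matrix `X` for `Φ A`, `Φ B` is pulled back to the test matrix `Ψ X` for `A`, `B`. -/
lemma relEntropy_map_le [DecidableEq κ] (hA : A.PosDef) (hB : B.PosDef) (hΦA : (Φ A).PosDef)
    (hΦB : (Φ B).PosDef)
    (hadj : ∀ A X, (Φ A * X).trace = (A * Ψ X).trace) (hstar : ∀ X, Ψ Xᴴ = (Ψ X)ᴴ)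
    (hSchwarz : ∀ X, (Ψ (Xᴴ * X) - (Ψ X)ᴴ * Ψ X).PosSemidef) :
    relEntropy (Φ A) (Φ B) ≤ relEntropy A B := by
  rw [relEntropy_eq_integral hA hB, relEntropy_eq_integral hΦA hΦB]
  refine setIntegral_mono_on (integrableOn_chiSqDiv hΦA hΦB) (integrableOn_chiSqDiv hA hB)
    measurableSet_Ioi fun t (ht : 0 < t) => ?_
  obtain ⟨X, hX⟩ := (isGreatest_chiSqDiv hΦA hΦB ht.le).1
  gcongr
  calc chiSqDiv hΦA.1 hΦB.1 t = chiSqFunctional (Φ A) (Φ B) t X := hX.symm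
    _ ≤ chiSqFunctional A B t (Ψ X) :=
      chiSqFunctional_map_le hA.posSemidef hB.posSemidef hadj hstar hSchwarz ht.le X
    _ ≤ chiSqDiv hA.1 hB.1 t := (isGreatest_chiSqDiv hA hB ht.le).2 ⟨Ψ X, rfl⟩

end RelEntropy

section Concavity

variable {ι : Type*} [DecidableEq ι]

lemma posDef_add_smul_one [Finite ι] {A : Matrix ι ι ℂ} (hA : A.PosSemidef) {t : ℝ} (ht : 0 < t) :
    (A + t • (1 : Matrix ι ι ℂ)).PosDef :=
  PosDef.posSemidef_add hA (PosDef.one.smul ht)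

variable [Fintype ι]

lemma concaveOn_vnEntropy_posDef : ConcaveOn ℝ {A : Matrix ι ι ℂ | A.PosDef} vnEntropy := by
  have hconv : Convex ℝ {A : Matrix ι ι ℂ | A.PosDef} := by
    intro A hA B hB a b ha hb hab
    rcases ha.eq_or_lt with rfl | ha
    · rw [zero_add] at hab
      rwa [hab, one_smul, zero_smul, zero_add]
    · exact (hA.smul ha).add_posSemidef (hB.posSemidef.smul hb)
  refine ⟨hconv, fun A hA B hB a b ha hb hab => ?_⟩
  have hM : (a • A + b • B).PosDef := hconv hA hB ha hb hab
  set M := a • A + b • B with hM_def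
  have hAM := mul_nonneg ha (relEntropy_nonneg hA hM)
  have hBM := mul_nonneg hb (relEntropy_nonneg hB hM)
  rw [relEntropy_eq_neg_vnEntropy_sub hA.1] at hAM
  rw [relEntropy_eq_neg_vnEntropy_sub hB.1] at hBM
  have hlog : (M * cfc Real.log M).trace.re =
      a * (A * cfc Real.log M).trace.re + b * (B * cfc Real.log M).trace.re := by
    nth_rw 1 [hM_def]
    simp only [add_mul, smul_mul_assoc, trace_add, trace_smul, Complex.add_re, Complex.real_smul,
      Complex.re_ofReal_mul]
  have htr : M.trace.re = a * A.trace.re + b * B.trace.re := by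
    simp only [hM_def, trace_add, trace_smul, Complex.add_re, Complex.real_smul,
      Complex.re_ofReal_mul]
  have hM_eq := vnEntropy_eq_neg_trace_mul_log hM.1
  rw [smul_eq_mul, smul_eq_mul]
  linear_combination hAM + hBM + hlog - hM_eq + M.trace.re * hab + htr

lemma concaveOn_vnEntropy : ConcaveOn ℝ {A : Matrix ι ι ℂ | A.PosSemidef} vnEntropy := by
  have hconv : Convex ℝ {A : Matrix ι ι ℂ | A.PosSemidef} := fun A hA B hB a b ha hb _ =>
    (hA.smul ha).add (hB.smul hb)
  refine ⟨hconv, fun A hA B hB a b ha hb hab => ?_⟩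
  refine le_of_tendsto_of_tendsto
    (((tendsto_vnEntropy_add_smul_one hA.1).const_smul a).add
      ((tendsto_vnEntropy_add_smul_one hB.1).const_smul b))
    (tendsto_vnEntropy_add_smul_one (hconv hA hB ha hb hab).1)
    (eventually_nhdsWithin_of_forall fun t ht => ?_)
  have hshift : a • A + b • B + t • (1 : Matrix ι ι ℂ) =
      a • (A + t • (1 : Matrix ι ι ℂ)) + b • (B + t • (1 : Matrix ι ι ℂ)) := by
    rw [smul_add, smul_add, smul_smul, smul_smul, add_add_add_comm, ← add_smul, ← add_mul, hab,
      one_mul]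
  simpa only [hshift] using concaveOn_vnEntropy_posDef.2 (posDef_add_smul_one hA ht)
    (posDef_add_smul_one hB ht) ha hb hab

end Concavity

section CondExp

variable {ι : Type*} [Fintype ι] [DecidableEq ι]

/-- Trace-preserving conditional expectations onto unital `*`-subalgebras of a matrix algebra; the
subalgebra is the range of `E`. -/
structure IsCondExp (E : Module.End ℂ (Matrix ι ι ℂ)) : Prop where
  map_one : E 1 = 1
  map_conjTranspose (A : Matrix ι ι ℂ) : E Aᴴ = (E A)ᴴ
  map_mul_map (A B : Matrix ι ι ℂ) : E (A * E B) = E A * E B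
  trace_map_mul (A B : Matrix ι ι ℂ) : (E A * B).trace = (A * E B).trace
  posSemidef_map {A : Matrix ι ι ℂ} : A.PosSemidef → (E A).PosSemidef

namespace IsCondExp

variable {E F : Module.End ℂ (Matrix ι ι ℂ)} {A B : Matrix ι ι ℂ}

lemma map_map (hE : IsCondExp E) (A : Matrix ι ι ℂ) : E (E A) = E A := by
  simpa only [one_mul, hE.map_one] using hE.map_mul_map 1 A

lemma trace_map (hE : IsCondExp E) (A : Matrix ι ι ℂ) : (E A).trace = A.trace := by
  simpa only [mul_one, hE.map_one] using hE.trace_map_mul A 1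

lemma map_map_mul (hE : IsCondExp E) (A B : Matrix ι ι ℂ) : E (E A * B) = E A * E B := by
  have h := hE.map_mul_map Bᴴ Aᴴ
  rwa [hE.map_conjTranspose, hE.map_conjTranspose, ← conjTranspose_mul, ← conjTranspose_mul,
    hE.map_conjTranspose, conjTranspose_inj] at h

lemma map_add_smul_one (hE : IsCondExp E) (A : Matrix ι ι ℂ) (t : ℝ) :
    E (A + t • (1 : Matrix ι ι ℂ)) = E A + t • (1 : Matrix ι ι ℂ) := by
  rw [map_add, LinearMap.map_smul_of_tower, hE.map_one]

lemma posDef_map (hE : IsCondExp E) (hA : A.PosDef) : (E A).PosDef := by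
  cases isEmpty_or_nonempty ι
  · rwa [Subsingleton.elim (E A) A]
  obtain ⟨t, ht, hle⟩ := (CFC.exists_pos_algebraMap_le_iff hA.1.isSelfAdjoint).2 (by
    rw [hA.1.spectrum_real_eq_range_eigenvalues]
    rintro _ ⟨i, rfl⟩
    exact hA.eigenvalues_pos i)
  rw [Matrix.le_iff, Algebra.algebraMap_eq_smul_one] at hle
  simpa only [← hE.map_add_smul_one, sub_add_cancel] using
    posDef_add_smul_one (hE.posSemidef_map hle) ht

/-- The Schwarz inequality for a conditional expectation, from `0 ≤ E ((X - E X)ᴴ * (X - E X))`. -/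
lemma posSemidef_map_conjTranspose_mul_self_sub (hE : IsCondExp E) (X : Matrix ι ι ℂ) :
    (E (Xᴴ * X) - (E X)ᴴ * E X).PosSemidef := by
  have h := hE.posSemidef_map (posSemidef_conjTranspose_mul_self (X - E X))
  have hexpand : E ((X - E X)ᴴ * (X - E X)) = E (Xᴴ * X) - (E X)ᴴ * E X := by
    rw [conjTranspose_sub, sub_mul, mul_sub, mul_sub, map_sub, map_sub, map_sub, hE.map_mul_map,
      ← hE.map_conjTranspose X, hE.map_map_mul, hE.map_map_mul, hE.map_map, sub_self, sub_zero]
  rwa [hexpand] at h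

/-- The range of a conditional expectation, described as its set of fixed points. -/
def fixedPoints (hE : IsCondExp E) : StarSubalgebra ℂ (Matrix ι ι ℂ) where
  carrier := {A | E A = A}
  mul_mem' {A B} (hA : E A = A) (hB : E B = B) := show E (A * B) = A * B by
    rw [← hB, hE.map_mul_map, hA, hB]
  add_mem' {A B} (hA : E A = A) (hB : E B = B) := show E (A + B) = A + B by
    rw [map_add, hA, hB]
  algebraMap_mem' z := show E (algebraMap ℂ _ z) = algebraMap ℂ _ z by
    rw [Algebra.algebraMap_eq_smul_one, map_smul, hE.map_one]
  star_mem' {A} (hA : E A = A) := show E Aᴴ = Aᴴ by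
    rw [hE.map_conjTranspose, hA]

lemma map_cfc (hE : IsCondExp E) (f : ℝ → ℝ) (hA : E A = A) : E (cfc f A) = cfc f A := by
  have hclosed : IsClosed (hE.fixedPoints : Set (Matrix ι ι ℂ)) :=
    (Subalgebra.toSubmodule hE.fixedPoints.toSubalgebra).closed_of_finiteDimensional
  exact cfc_mem (s := hE.fixedPoints) f hA

lemma relEntropy_self_map (hE : IsCondExp E) (hA : A.PosSemidef) :
    relEntropy A (E A) = vnEntropy (E A) - vnEntropy A := by
  have hlog : (A * cfc Real.log (E A)).trace = (E A * cfc Real.log (E A)).trace := by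
    rw [hE.trace_map_mul, hE.map_cfc _ (hE.map_map A)]
  rw [relEntropy_eq_neg_vnEntropy_sub hA.1, hlog, hE.trace_map,
    vnEntropy_eq_neg_trace_mul_log (hE.posSemidef_map hA).1]
  ring

lemma relEntropy_map_map_le (hE : IsCondExp E) (hA : A.PosDef) (hB : B.PosDef) :
    relEntropy (E A) (E B) ≤ relEntropy A B :=
  relEntropy_map_le hA hB (hE.posDef_map hA) (hE.posDef_map hB) hE.trace_map_mul
    hE.map_conjTranspose hE.posSemidef_map_conjTranspose_mul_self_sub

/-- `S(F A) - S(A)` is the relative entropy of `A` and `F A`, which decreases under `E`. -/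
lemma vnEntropy_add_map_map_le_of_posDef (hE : IsCondExp E) (hF : IsCondExp F) (hEF : Commute E F)
    (hA : A.PosDef) :
    vnEntropy A + vnEntropy (E (F A)) ≤ vnEntropy (E A) + vnEntropy (F A) := by
  have hcomm : E (F A) = F (E A) := LinearMap.congr_fun hEF.eq A
  have hmono : relEntropy (E A) (F (E A)) ≤ relEntropy A (F A) := by
    rw [← hcomm]
    exact hE.relEntropy_map_map_le hA (hF.posDef_map hA)
  rw [hF.relEntropy_self_map (hE.posDef_map hA).posSemidef,
    hF.relEntropy_self_map hA.posSemidef] at hmono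
  rw [hcomm]
  linarith

/-- **Strong subadditivity** for a commuting square of conditional expectations. -/
lemma vnEntropy_add_map_map_le (hE : IsCondExp E) (hF : IsCondExp F) (hEF : Commute E F)
    (hA : A.PosSemidef) :
    vnEntropy A + vnEntropy (E (F A)) ≤ vnEntropy (E A) + vnEntropy (F A) := by
  have hlimA := tendsto_vnEntropy_add_smul_one hA.1
  have hlimE := tendsto_vnEntropy_add_smul_one (hE.posSemidef_map hA).1
  have hlimF := tendsto_vnEntropy_add_smul_one (hF.posSemidef_map hA).1
  have hlimEF := tendsto_vnEntropy_add_smul_one (hE.posSemidef_map (hF.posSemidef_map hA)).1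
  refine le_of_tendsto_of_tendsto (hlimA.add hlimEF) (hlimE.add hlimF)
    (eventually_nhdsWithin_of_forall fun t ht => ?_)
  simpa only [hE.map_add_smul_one, hF.map_add_smul_one] using
    hE.vnEntropy_add_map_map_le_of_posDef hF hEF (posDef_add_smul_one hA ht)

end IsCondExp

end CondExp

section ErasureFamily

variable {ι κ : Type*} [Fintype ι] [DecidableEq ι] [DecidableEq κ]

/-- A family of commuting conditional expectations `E S`, where `E S` erases the sites in `S`;
commutativity is not a field, since `map_union` yields it from `S ∪ T = T ∪ S`. -/
structure IsErasureFamily (E : Finset κ → Module.End ℂ (Matrix ι ι ℂ)) : Prop where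
  isCondExp (S : Finset κ) : IsCondExp (E S)
  map_empty : E ∅ = 1
  map_union (S T : Finset κ) : E (S ∪ T) = E S * E T

/-- The channel that erases each site of `U` independently with probability `p`, as a mixture over
the set `S` of erased sites. -/
noncomputable def erasureNoise (E : Finset κ → Module.End ℂ (Matrix ι ι ℂ)) (p : ℝ)
    (U : Finset κ) : Module.End ℂ (Matrix ι ι ℂ) :=
  ∑ S ∈ U.powerset, (p ^ S.card * (1 - p) ^ (U.card - S.card)) • E S

namespace IsErasureFamily

variable {E : Finset κ → Module.End ℂ (Matrix ι ι ℂ)} {p : ℝ} {U : Finset κ} {i : κ}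

lemma commute (hE : IsErasureFamily E) (S T : Finset κ) : Commute (E S) (E T) := by
  rw [commute_iff_eq, ← hE.map_union, ← hE.map_union, Finset.union_comm]

lemma erasureNoise_empty (hE : IsErasureFamily E) (p : ℝ) : erasureNoise E p ∅ = 1 := by
  simp [erasureNoise, hE.map_empty]

lemma erasureNoise_insert (hE : IsErasureFamily E) (p : ℝ) (hi : i ∉ U) :
    erasureNoise E p (insert i U) =
      (1 - p) • erasureNoise E p U + p • (E {i} * erasureNoise E p U) := by
  rw [erasureNoise, Finset.sum_powerset_insert hi, erasureNoise, Finset.mul_sum, Finset.smul_sum,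
    Finset.smul_sum]
  refine congrArg₂ _ (Finset.sum_congr rfl fun S hS => ?_) (Finset.sum_congr rfl fun S hS => ?_)
  · rw [Finset.card_insert_of_notMem hi,
      Nat.succ_sub (Finset.card_le_card (Finset.mem_powerset.1 hS)), smul_smul, pow_succ]
    congr 1
    ring
  · rw [Finset.card_insert_of_notMem hi,
      Finset.card_insert_of_notMem fun h => hi (Finset.mem_powerset.1 hS h), Nat.add_sub_add_right,
      Finset.insert_eq, hE.map_union, mul_smul_comm, smul_smul, pow_succ]
    congr 1
    ring

lemma commute_erasureNoise (hE : IsErasureFamily E) (S : Finset κ) (p : ℝ) (U : Finset κ) :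
    Commute (E S) (erasureNoise E p U) :=
  Commute.sum_right _ _ _ fun T _ => (hE.commute S T).smul_right _

lemma posSemidef_erasureNoise (hE : IsErasureFamily E) (hp0 : 0 ≤ p) (hp1 : p ≤ 1)
    {A : Matrix ι ι ℂ} (hA : A.PosSemidef) : (erasureNoise E p U A).PosSemidef := by
  rw [erasureNoise, LinearMap.sum_apply]
  exact posSemidef_sum _ fun S _ => ((hE.isCondExp S).posSemidef_map hA).smul
    (mul_nonneg (pow_nonneg hp0 _) (pow_nonneg (sub_nonneg.2 hp1) _))

lemma vnEntropy_erasureNoise_ge (hE : IsErasureFamily E) (hp0 : 0 ≤ p) (hp1 : p ≤ 1)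
    {A : Matrix ι ι ℂ} (hA : A.PosSemidef) :
    (1 - p) * vnEntropy A + p * vnEntropy (E U A) ≤ vnEntropy (erasureNoise E p U A) := by
  induction U using Finset.induction_on generalizing A with
  | empty =>
    rw [hE.erasureNoise_empty, hE.map_empty, Module.End.one_apply]
    linarith
  | insert i U hi ih =>
    have hEA : (E {i} A).PosSemidef := (hE.isCondExp {i}).posSemidef_map hA
    have hcomm : E {i} (erasureNoise E p U A) = erasureNoise E p U (E {i} A) :=
      LinearMap.congr_fun (hE.commute_erasureNoise {i} p U).eq A
    have hunion : E (insert i U) A = E {i} (E U A) := by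
      rw [Finset.insert_eq, hE.map_union, Module.End.mul_apply]
    have hswap : E U (E {i} A) = E {i} (E U A) := LinearMap.congr_fun (hE.commute U {i}).eq A
    have hSSA := mul_le_mul_of_nonneg_left ((hE.isCondExp {i}).vnEntropy_add_map_map_le
      (hE.isCondExp U) (hE.commute {i} U) hA) (mul_nonneg hp0 (sub_nonneg.2 hp1))
    have hconc := concaveOn_vnEntropy.2 (hE.posSemidef_erasureNoise (U := U) hp0 hp1 hA)
      (hE.posSemidef_erasureNoise (U := U) hp0 hp1 hEA) (sub_nonneg.2 hp1) hp0
      (sub_add_cancel 1 p)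
    have hA_ih := mul_le_mul_of_nonneg_left (ih hA) (sub_nonneg.2 hp1)
    have hEA_ih := mul_le_mul_of_nonneg_left (ih hEA) hp0
    rw [hE.erasureNoise_insert p hi, LinearMap.add_apply, LinearMap.smul_apply,
      LinearMap.smul_apply, Module.End.mul_apply, hcomm, hunion]
    rw [hswap] at hEA_ih
    rw [smul_eq_mul, smul_eq_mul] at hconc
    linear_combination hconc + hA_ih + hEA_ih + hSSA

end IsErasureFamily

end ErasureFamily

section MinEntropy

variable {ι : Type*} [Fintype ι] [DecidableEq ι] {A : Matrix ι ι ℂ}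

lemma re_trace_eq_sum_eigenvalues (hA : A.IsHermitian) : A.trace.re = ∑ i, hA.eigenvalues i := by
  rw [hA.trace_eq_sum_eigenvalues, Complex.re_sum]
  rfl

lemma neg_trace_mul_log_le_vnEntropy (hA : A.PosSemidef) {r : ℝ}
    (hr : (r • (1 : Matrix ι ι ℂ) - A).PosSemidef) :
    -(A.trace.re * Real.log r) ≤ vnEntropy A := by
  have hle (i : ι) : hA.1.eigenvalues i ≤ r := by
    rw [← Algebra.algebraMap_eq_smul_one, ← Matrix.le_iff,
      le_algebraMap_iff_spectrum_le hA.1.isSelfAdjoint] at hr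
    exact hr _ (hA.1.spectrum_real_eq_range_eigenvalues ▸ Set.mem_range_self i)
  rw [vnEntropy_eq_sum hA.1, re_trace_eq_sum_eigenvalues hA.1, Finset.sum_mul,
    ← Finset.sum_neg_distrib]
  refine Finset.sum_le_sum fun i _ => ?_
  rw [Real.negMulLog, neg_mul, neg_le_neg_iff]
  rcases (hA.eigenvalues_nonneg i).eq_or_lt with hzero | hpos
  · rw [← hzero, zero_mul, zero_mul]
  · exact mul_le_mul_of_nonneg_left (Real.log_le_log hpos (hle i)) hpos.le

lemma posSemidef_trace_smul_one_sub (hA : A.PosSemidef) :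
    (A.trace.re • (1 : Matrix ι ι ℂ) - A).PosSemidef := by
  rw [← Algebra.algebraMap_eq_smul_one, ← Matrix.le_iff]
  refine le_algebraMap_of_spectrum_le (ha := hA.1.isSelfAdjoint) fun x hx => ?_
  rw [hA.1.spectrum_real_eq_range_eigenvalues] at hx
  obtain ⟨i, rfl⟩ := hx
  rw [re_trace_eq_sum_eigenvalues hA.1]
  exact Finset.single_le_sum (fun j _ => hA.eigenvalues_nonneg j) (Finset.mem_univ i)

end MinEntropy

section Depolarize

variable {ι α β : Type*} [Fintype α]

/-- The partial trace over the first factor of `ι ≃ α × β`. -/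
def partialTrace (e : ι ≃ α × β) : Matrix ι ι ℂ →ₗ[ℂ] Matrix β β ℂ where
  toFun A := ∑ a, A.submatrix (fun b => e.symm (a, b)) (fun b => e.symm (a, b))
  map_add' A B := by simp only [submatrix_add, Pi.add_apply, Finset.sum_add_distrib]
  map_smul' z A := by
    simp only [submatrix_smul, Pi.smul_apply, Finset.smul_sum, RingHom.id_apply]

variable (e : ι ≃ α × β)

lemma partialTrace_apply (A : Matrix ι ι ℂ) (b b' : β) :
    partialTrace e A b b' = ∑ a, A (e.symm (a, b)) (e.symm (a, b')) :=
  Matrix.sum_apply b b' _ _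

lemma partialTrace_one [DecidableEq ι] [DecidableEq β] :
    partialTrace e 1 = (Fintype.card α : ℂ) • 1 := by
  ext b b'
  simp [partialTrace_apply, one_apply]

lemma partialTrace_conjTranspose (A : Matrix ι ι ℂ) :
    partialTrace e Aᴴ = (partialTrace e A)ᴴ := by
  ext b b'
  simp [partialTrace_apply]

lemma posSemidef_partialTrace {A : Matrix ι ι ℂ} (hA : A.PosSemidef) :
    (partialTrace e A).PosSemidef :=
  posSemidef_sum _ fun _ _ => hA.submatrix _

variable [Fintype ι] [Fintype β]

lemma trace_partialTrace (A : Matrix ι ι ℂ) : (partialTrace e A).trace = A.trace := by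
  simp only [trace, diag_apply, partialTrace_apply]
  rw [Finset.sum_comm, ← Fintype.sum_prod_type' (f := fun a b => A (e.symm (a, b)) (e.symm (a, b)))]
  exact e.symm.sum_comp fun i => A i i

variable [DecidableEq ι] [DecidableEq α] [DecidableEq β]

/-- The embedding `B ↦ 1 ⊗ B` of the matrices over the second factor of `ι ≃ α × β`. -/
def ampliate : Matrix β β ℂ →⋆ₐ[ℂ] Matrix ι ι ℂ where
  toFun B := ((1 : Matrix α α ℂ) ⊗ₖ B).submatrix e e
  map_one' := by rw [one_kronecker_one, submatrix_one_equiv]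
  map_mul' B C := by rw [submatrix_mul_equiv, ← mul_kronecker_mul, one_mul]
  map_zero' := by rw [kronecker_zero, submatrix_zero]; rfl
  map_add' B C := by rw [kronecker_add, submatrix_add]; rfl
  commutes' z := by
    rw [Algebra.algebraMap_eq_smul_one, Algebra.algebraMap_eq_smul_one, kronecker_smul,
      one_kronecker_one, submatrix_smul]
    exact congrArg (fun A : Matrix ι ι ℂ => z • A) (submatrix_one_equiv e)
  map_star' B := by
    rw [star_eq_conjTranspose, star_eq_conjTranspose, conjTranspose_submatrix,
      conjTranspose_kronecker, conjTranspose_one]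

lemma ampliate_apply (B : Matrix β β ℂ) (i j : ι) :
    ampliate e B i j = if (e i).1 = (e j).1 then B (e i).2 (e j).2 else 0 := by
  change (1 : Matrix α α ℂ) _ _ * _ = _
  rw [one_apply, ite_mul, one_mul, zero_mul]

lemma posSemidef_ampliate {B : Matrix β β ℂ} (hB : B.PosSemidef) : (ampliate e B).PosSemidef :=
  (PosSemidef.one.kronecker hB).submatrix e

lemma partialTrace_mul_ampliate (A : Matrix ι ι ℂ) (B : Matrix β β ℂ) :
    partialTrace e (A * ampliate e B) = partialTrace e A * B := by
  ext b b'
  simp only [partialTrace_apply, mul_apply, ampliate_apply, Equiv.apply_symm_apply,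
    Finset.sum_mul, mul_ite, mul_zero]
  rw [Finset.sum_comm, ← e.symm.sum_comp]
  simp [Fintype.sum_prod_type_right]

lemma trace_mul_ampliate (A : Matrix ι ι ℂ) (B : Matrix β β ℂ) :
    (A * ampliate e B).trace = (partialTrace e A * B).trace := by
  rw [← partialTrace_mul_ampliate, trace_partialTrace]

/-- The map `A ↦ (1 / card α) ⊗ tr_α A` that replaces the first factor of `ι ≃ α × β` by the
maximally mixed state. -/
noncomputable def depolarize : Module.End ℂ (Matrix ι ι ℂ) :=
  (Fintype.card α : ℂ)⁻¹ • (ampliate e).toAlgHom.toLinearMap ∘ₗ partialTrace e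

lemma depolarize_eq_smul (A : Matrix ι ι ℂ) :
    depolarize e A = (Fintype.card α : ℂ)⁻¹ • ampliate e (partialTrace e A) := rfl

lemma isCondExp_depolarize [Nonempty α] : IsCondExp (depolarize e) where
  map_one := by
    rw [depolarize_eq_smul, partialTrace_one, map_smul, map_one, smul_smul,
      inv_mul_cancel₀ (Nat.cast_ne_zero.2 Fintype.card_ne_zero), one_smul]
  map_conjTranspose A := by
    rw [depolarize_eq_smul, depolarize_eq_smul, partialTrace_conjTranspose, conjTranspose_smul,
      ← star_eq_conjTranspose, map_star, star_inv₀, star_natCast, star_eq_conjTranspose]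
  map_mul_map A B := by
    simp only [depolarize_eq_smul, mul_smul_comm, smul_mul_assoc, map_smul,
      partialTrace_mul_ampliate, map_mul]
  trace_map_mul A B := by
    simp only [depolarize_eq_smul, smul_mul_assoc, mul_smul_comm, trace_smul,
      trace_mul_ampliate, trace_mul_comm _ B, trace_mul_comm _ (partialTrace e B)]
  posSemidef_map hA := by
    rw [depolarize_eq_smul]
    exact (posSemidef_ampliate e (posSemidef_partialTrace e hA)).smul
      (inv_nonneg.2 (Nat.cast_nonneg _))

lemma log_card_le_vnEntropy_depolarize [Nonempty α] {A : Matrix ι ι ℂ} (hA : A.PosSemidef)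
    (htr : A.trace = 1) : Real.log (Fintype.card α) ≤ vnEntropy (depolarize e A) := by
  have hle : ((Fintype.card α : ℝ)⁻¹ • (1 : Matrix ι ι ℂ) - depolarize e A).PosSemidef := by
    have h := posSemidef_trace_smul_one_sub (posSemidef_partialTrace e hA)
    rw [trace_partialTrace, htr, Complex.one_re, one_smul] at h
    convert (posSemidef_ampliate e h).smul (a := (Fintype.card α : ℝ)⁻¹) (by positivity) using 1
    rw [depolarize_eq_smul, map_sub, map_one, smul_sub]
    congr 1
    ext
    simp
  have h := neg_trace_mul_log_le_vnEntropy ((isCondExp_depolarize e).posSemidef_map hA) hle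
  rwa [(isCondExp_depolarize e).trace_map, htr, Complex.one_re, one_mul, Real.log_inv, neg_neg] at h

end Depolarize

section Sites

variable {σ q γ : Type*} [DecidableEq σ]

/-- The splitting of a configuration of sites `σ` with an ancilla `γ` into the configuration on
`S` and the rest. -/
def siteEquiv (S : Finset σ) : (σ → q) × γ ≃ (S → q) × ({i // i ∉ S} → q) × γ :=
  ((Equiv.piEquivPiSubtypeProd (· ∈ S) fun _ => q).prodCongr (Equiv.refl γ)).trans
    (Equiv.prodAssoc _ _ _)

lemma siteEquiv_fst_eq_iff (S : Finset σ) (x y : (σ → q) × γ) :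
    (siteEquiv S x).1 = (siteEquiv S y).1 ↔ ∀ i ∈ S, x.1 i = y.1 i :=
  funext_iff.trans Subtype.forall

lemma siteEquiv_symm_piecewise (S : Finset σ) (z : σ → q) (x : (σ → q) × γ) :
    (siteEquiv S).symm (fun i => z i, (siteEquiv S x).2) = (S.piecewise z x.1, x.2) := rfl

lemma piecewise_union (S T : Finset σ) (w z x : σ → q) :
    (S ∪ T).piecewise (T.piecewise w z) x = T.piecewise w (S.piecewise z x) := by
  ext i
  by_cases hT : i ∈ T <;> simp [Finset.piecewise, hT]

variable [Fintype σ] [Fintype q]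

lemma sum_restrict_eq_smul_sum {M : Type*} [AddCommMonoid M] (S : Finset σ) (f : (S → q) → M) :
    ∑ z : σ → q, f (fun i => z i) = Fintype.card ({i // i ∉ S} → q) • ∑ z, f z := by
  rw [← (Equiv.piEquivPiSubtypeProd (· ∈ S) fun _ => q).symm.sum_comp, Fintype.sum_prod_type_right,
    ← Finset.card_univ, ← Finset.sum_const]
  refine Finset.sum_congr rfl fun w _ => Finset.sum_congr rfl fun z _ => ?_
  congr 1
  ext i
  simp

lemma sum_sum_piecewise {M : Type*} [AddCommMonoid M] (T : Finset σ) (f : (σ → q) → M) :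
    ∑ z, ∑ w, f (T.piecewise w z) = Fintype.card (σ → q) • ∑ z, f z := by
  have hswap : Function.Involutive fun v : (σ → q) × (σ → q) =>
      (T.piecewise v.2 v.1, T.piecewise v.1 v.2) := fun v => by
    simp [Finset.piecewise_same]
  calc ∑ z, ∑ w, f (T.piecewise w z)
    _ = ∑ v : (σ → q) × (σ → q), f (T.piecewise v.2 v.1) :=
      (Fintype.sum_prod_type' fun z w => f (T.piecewise w z)).symm
    _ = ∑ v : (σ → q) × (σ → q), f v.1 := Equiv.sum_comp (hswap.toPerm _) fun v => f v.1
    _ = Fintype.card (σ → q) • ∑ z, f z := by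
      rw [Fintype.sum_prod_type_right, ← Finset.card_univ, ← Finset.sum_const]

variable [Fintype γ] [DecidableEq q] [DecidableEq γ] [Nonempty q]
  (A : Matrix ((σ → q) × γ) ((σ → q) × γ) ℂ)

lemma depolarize_siteEquiv_apply (S : Finset σ) (x y : (σ → q) × γ) :
    depolarize (siteEquiv S) A x y =
      if ∀ i ∈ S, x.1 i = y.1 i then
        (Fintype.card (σ → q) : ℂ)⁻¹ *
          ∑ z : σ → q, A (S.piecewise z x.1, x.2) (S.piecewise z y.1, y.2)
      else 0 := by
  have hcard : Fintype.card (σ → q) =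
      Fintype.card (S → q) * Fintype.card ({i // i ∉ S} → q) := by
    rw [← Fintype.card_prod, Fintype.card_congr (Equiv.piEquivPiSubtypeProd (· ∈ S) fun _ => q)]
  have hsum := sum_restrict_eq_smul_sum S fun z => A ((siteEquiv S).symm (z, (siteEquiv S x).2))
    ((siteEquiv S).symm (z, (siteEquiv S y).2))
  simp only [siteEquiv_symm_piecewise] at hsum
  rw [depolarize_eq_smul, Matrix.smul_apply, ampliate_apply, smul_eq_mul, mul_ite, mul_zero]
  simp only [siteEquiv_fst_eq_iff, partialTrace_apply]
  rw [hsum, hcard, nsmul_eq_mul, Nat.cast_mul, mul_inv, mul_assoc, inv_mul_cancel_left₀]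
  exact Nat.cast_ne_zero.2 Fintype.card_ne_zero

lemma depolarize_siteEquiv_union (S T : Finset σ) :
    depolarize (siteEquiv (S ∪ T)) A =
      depolarize (siteEquiv S) (depolarize (siteEquiv T) A) := by
  ext x y
  rw [depolarize_siteEquiv_apply, depolarize_siteEquiv_apply]
  by_cases hS : ∀ i ∈ S, x.1 i = y.1 i
  · have hST (z : σ → q) : (∀ i ∈ T, S.piecewise z x.1 i = S.piecewise z y.1 i) ↔
        ∀ i ∈ S ∪ T, x.1 i = y.1 i := by
      simp only [Finset.piecewise, Finset.mem_union]
      grind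
    simp only [depolarize_siteEquiv_apply, hST, if_pos hS]
    split_ifs
    · simp only [← Finset.mul_sum, ← piecewise_union]
      rw [sum_sum_piecewise T fun z => A ((S ∪ T).piecewise z x.1, x.2)
        ((S ∪ T).piecewise z y.1, y.2), nsmul_eq_mul, inv_mul_cancel_left₀]
      exact Nat.cast_ne_zero.2 Fintype.card_ne_zero
    · simp
  · rw [if_neg hS, if_neg fun h => hS fun i hi => h i (Finset.mem_union_left T hi)]

lemma isErasureFamily_depolarize :
    IsErasureFamily fun S : Finset σ => depolarize (siteEquiv (q := q) (γ := γ) S) where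
  isCondExp S := isCondExp_depolarize _
  map_empty := by
    ext A x y
    rw [depolarize_siteEquiv_apply]
    simp
  map_union S T := LinearMap.ext fun A => depolarize_siteEquiv_union A S T

end Sites

section Qubits

variable {k c : ℕ}
  (ρ : Matrix ((Fin k → Fin 2) × (Fin c → Fin 2)) ((Fin k → Fin 2) × (Fin c → Fin 2)) ℂ)

lemma depolarize_siteEquiv_eq_depolSet (S : Finset (Fin k)) :
    depolarize (siteEquiv S) ρ = depolSet S ρ := by
  ext x y
  have hpow : (2 : ℂ) ^ k = 2 ^ S.card * 2 ^ (k - S.card) := by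
    rw [← pow_add, Nat.add_sub_cancel' (card_finset_fin_le S)]
  rw [depolarize_siteEquiv_apply, depolSet, of_apply, ← mul_assoc, ← mul_inv, ← hpow]
  simp

lemma erasureNoise_depolarize_eq_depolChannel (p : ℝ) :
    erasureNoise (fun S => depolarize (siteEquiv S)) p Finset.univ ρ = depolChannel p ρ := by
  rw [erasureNoise, depolChannel, Finset.powerset_univ, LinearMap.sum_apply]
  refine Finset.sum_congr rfl fun S _ => ?_
  rw [LinearMap.smul_apply, depolarize_siteEquiv_eq_depolSet, ← Complex.coe_smul, Finset.card_univ,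
    Fintype.card_fin]
  push_cast
  rfl

end Qubits

/-- `S(D_p^{n_c}(ρ)) ≥ (1−p)·S(ρ) + p·(n−n_c)·log 2`,
with `k = n − n_c` system qubits and `c = n_c` untouched qubits. -/
theorem entropy_depolarizing_lower_bound (k c : ℕ) (p : ℝ) (hp0 : 0 ≤ p) (hp1 : p ≤ 1)
    (ρ : Matrix ((Fin k → Fin 2) × (Fin c → Fin 2)) ((Fin k → Fin 2) × (Fin c → Fin 2)) ℂ)
    (hρ : ρ.PosSemidef) (htr : ρ.trace = 1) :
    (1 - p) * vnEntropy ρ + p * k * Real.log 2 ≤ vnEntropy (depolChannel p ρ) := by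
  have hfull : k * Real.log 2 ≤ vnEntropy (depolarize (siteEquiv Finset.univ) ρ) := by
    simpa using log_card_le_vnEntropy_depolarize (siteEquiv (Finset.univ : Finset (Fin k))) hρ htr
  calc (1 - p) * vnEntropy ρ + p * k * Real.log 2
    _ ≤ (1 - p) * vnEntropy ρ + p * vnEntropy (depolarize (siteEquiv Finset.univ) ρ) := by
      rw [mul_assoc]
      gcongr
    _ ≤ vnEntropy (erasureNoise (fun S => depolarize (siteEquiv S)) p Finset.univ ρ) :=
      isErasureFamily_depolarize.vnEntropy_erasureNoise_ge hp0 hp1 hρ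
    _ = vnEntropy (depolChannel p ρ) := by rw [erasureNoise_depolarize_eq_depolChannel]
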